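/- arXiv:1011.1663 — 9 statements merged into one kernel-verified Lean document; each statement's English description precedes it below -/
import Mathlib

section
/- Let (R, m) be a commutative Noetherian local ring having infinitely many prime ideals. Then the class (FG, FS) is not closed under injective hulls; that is, there exists an R-module X belonging to (FG, FS) whose injective hull E_R(X) does not belong to (FG, FS). -/
universe u

/-- The class `(FG, FS)`: an `R`-module `X` belongs to `(FG, FS)` if it has a finitely
generated submodule `F` such that `X ⧸ F` has finite support, i.e. `X` is an extension of a
module with finite support by a finitely generated module. -/
def InFGFS (R : Type u) [CommRing R] (X : Type u) [AddCommGroup X] [Module R X] : Prop :=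
  ∃ F : Submodule R X, F.FG ∧ (Module.support R (X ⧸ F)).Finite

/-- `f : X →ₗ[R] E` realizes `E` as an injective hull of `X`: `E` is injective, `f` is
injective, and the image of `f` is an essential submodule of `E`. -/
def IsInjectiveHull (R : Type u) [CommRing R] {X E : Type u} [AddCommGroup X] [Module R X]
    [AddCommGroup E] [Module R E] (f : X →ₗ[R] E) : Prop :=
  Module.Injective R E ∧ Function.Injective f ∧
    ∀ N : Submodule R E, N ≠ ⊥ → N ⊓ LinearMap.range f ≠ ⊥

theorem exists_prime_infinite_above
    (R : Type u) [CommRing R] [IsNoetherianRing R]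
    (h : Infinite (PrimeSpectrum R)) :
    ∃ p : Ideal R, p.IsPrime ∧ {q : PrimeSpectrum R | p ≤ q.asIdeal}.Infinite := by
  by_contra hcon
  push Not at hcon
  have hfin : (⋃ p ∈ minimalPrimes R, {q : PrimeSpectrum R | p ≤ q.asIdeal}).Finite := by
    refine (minimalPrimes.finite_of_isNoetherianRing R).biUnion fun p hp => ?_
    exact Set.not_infinite.mp (by simpa using hcon p hp.1.1)
  refine Set.infinite_univ (α := PrimeSpectrum R) (hfin.subset ?_)
  intro q _
  obtain ⟨p, hp, hpq⟩ := Ideal.exists_minimalPrimes_le (bot_le : (⊥ : Ideal R) ≤ q.asIdeal)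
  simp only [Set.mem_iUnion]
  exact ⟨p, hp, hpq⟩

theorem not_inFGFS_aux (R : Type u) [CommRing R] [IsNoetherianRing R] (p : Ideal R)
    [hp : p.IsPrime] (hinf : {q : PrimeSpectrum R | p ≤ q.asIdeal}.Infinite)
    (E : Type u) [AddCommGroup E] [Module R E] (f : (R ⧸ p) →ₗ[R] E)
    (hE : Module.Injective R E) (hf : Function.Injective f) : ¬ InFGFS R E := by
  rintro ⟨F, hF, hS⟩
  obtain ⟨q, ⟨hpq, hqS⟩, hqp⟩ :=
    ((hinf.sdiff hS).sdiff (Set.finite_singleton (⟨p, hp⟩ : PrimeSpectrum R))).nonempty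
  replace hpq : p ≤ q.asIdeal := hpq
  have hne : ¬ q.asIdeal ≤ p := fun hle => hqp (PrimeSpectrum.ext (le_antisymm hle hpq))
  obtain ⟨r, hrq, hrp⟩ := SetLike.not_le_iff_exists.mp hne
  -- divisibility of the `p`-torsion of `E`
  have hdiv : ∀ e : E, (∀ a ∈ p, a • e = 0) → ∃ e' : E, (∀ a ∈ p, a • e' = 0) ∧ r • e' = e := by
    intro e he
    let g : (R ⧸ p) →ₗ[R] E := p.liftQ (LinearMap.toSpanSingleton R E e) (by
      intro a ha
      simpa using he a ha)
    have hg : g (Submodule.Quotient.mk 1) = e := by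
      exact (Submodule.liftQ_apply p _ (1 : R)).trans (one_smul R e)
    let m : (R ⧸ p) →ₗ[R] (R ⧸ p) := LinearMap.lsmul R (R ⧸ p) r
    have hm : Function.Injective m := by
      rw [injective_iff_map_eq_zero]
      intro y hy
      obtain ⟨y, rfl⟩ := Ideal.Quotient.mk_surjective y
      have h2 : Ideal.Quotient.mk p (r * y) = 0 := hy
      rw [Ideal.Quotient.eq_zero_iff_mem] at h2 ⊢
      exact (hp.mem_or_mem h2).resolve_left hrp
    obtain ⟨k, hk⟩ := hE.out m hm g
    refine ⟨k (Submodule.Quotient.mk 1), ?_, ?_⟩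
    · intro a ha
      rw [← map_smul, ← Submodule.Quotient.mk_smul,
        (Submodule.Quotient.mk_eq_zero p).2 (by simpa using ha), map_zero]
    · rw [← map_smul, ← hg, ← hk]
      rfl
  have hloc : ∀ e : E, ∃ s ∉ q.asIdeal, s • e ∈ F := by
    intro e
    obtain ⟨s, hs, h0⟩ := Module.notMem_support_iff'.mp hqS (Submodule.Quotient.mk e)
    refine ⟨s, hs, ?_⟩
    rwa [← Submodule.Quotient.mk_smul, Submodule.Quotient.mk_eq_zero] at h0
  let T : Submodule R E := Submodule.torsionBySet R E (p : Set R)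
  have hT : ∀ e, e ∈ T ↔ ∀ a ∈ p, a • e = 0 := by
    intro e
    simp [T, Submodule.mem_torsionBySet_iff]
  let N : Submodule R E := F ⊓ T
  have : IsNoetherian R F := isNoetherian_of_fg_of_noetherian F hF
  have : IsNoetherian R N := isNoetherian_of_le (inf_le_left : N ≤ F)
  have hN : q ∉ Module.support R N := by
    intro hq
    have h1 : q ∈ Module.support R (N ⧸ (Ideal.span {r} • ⊤ : Submodule R N)) := by
      rw [Module.support_quotient]
      refine ⟨hq, ?_⟩
      simpa [PrimeSpectrum.mem_zeroLocus] using hrq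
    refine Module.notMem_support_iff'.mpr ?_ h1
    intro y
    obtain ⟨⟨e, heF, heT⟩, rfl⟩ := Submodule.Quotient.mk_surjective _ y
    obtain ⟨e', he', hre⟩ := hdiv e ((hT e).1 heT)
    obtain ⟨s, hs, hsF⟩ := hloc e'
    refine ⟨s, hs, ?_⟩
    rw [← Submodule.Quotient.mk_smul, Submodule.Quotient.mk_eq_zero]
    have hmem : s • e' ∈ N := ⟨hsF, T.smul_mem s ((hT e').2 he')⟩
    have heq : s • (⟨e, heF, heT⟩ : N) = r • (⟨s • e', hmem⟩ : N) := by
      apply Subtype.ext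
      change s • e = r • s • e'
      rw [smul_comm, hre]
    rw [heq]
    exact Submodule.smul_mem_smul (Ideal.mem_span_singleton_self r) trivial
  set x : E := f (Submodule.Quotient.mk 1) with hx
  have hann : ∀ a : R, a • x = 0 → a ∈ p := by
    intro a ha
    rw [hx, ← map_smul, ← Submodule.Quotient.mk_smul] at ha
    have h3 := (injective_iff_map_eq_zero f).1 hf _ ha
    simpa using (Submodule.Quotient.mk_eq_zero p).1 h3
  have hxT : x ∈ T := by
    rw [hT]
    intro a ha
    rw [hx, ← map_smul, ← Submodule.Quotient.mk_smul,
        (Submodule.Quotient.mk_eq_zero p).2 (by simpa using ha), map_zero]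
  obtain ⟨s, hs, hsF⟩ := hloc x
  obtain ⟨t, ht, h0⟩ := Module.notMem_support_iff'.mp hN ⟨s • x, hsF, T.smul_mem s hxT⟩
  have h4 : t • s • x = 0 := congrArg Subtype.val h0
  rw [smul_smul] at h4
  rcases q.isPrime.mem_or_mem (hpq (hann _ h4)) with h5 | h5
  · exact ht h5
  · exact hs h5

/-- If `(R, m)` is a commutative Noetherian local ring with infinitely many prime ideals, then
`(FG, FS)` is not closed under injective hulls: there is an `R`-module `X` in `(FG, FS)` whose
injective hull does not belong to `(FG, FS)`. -/
theorem fgfs_not_closed_under_injective_hulls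
    (R : Type u) [CommRing R] [IsNoetherianRing R] [IsLocalRing R]
    (h : Infinite (PrimeSpectrum R)) :
    ∃ X : ModuleCat.{u} R, InFGFS R X ∧
      ∀ (E : Type u) [AddCommGroup E] [Module R E] (f : X →ₗ[R] E),
        IsInjectiveHull R f → ¬ InFGFS R E := by
  obtain ⟨p, hp, hinf⟩ := exists_prime_infinite_above R h
  refine ⟨ModuleCat.of R (R ⧸ p), ⟨⊤, Module.Finite.fg_top (R := R) (M := R ⧸ p), ?_⟩, ?_⟩
  · rw [Module.support_eq_empty]
    exact Set.finite_empty
  · intro E _ _ f hf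
    exact not_inFGFS_aux R p hinf E f hf.1 hf.2.1
end

section
/- Let (R, m) be a commutative Noetherian local ring and let p be a prime ideal of R such that V(p) = {q ∈ Spec(R) : p ⊆ q} is an infinite set. Then the injective hull E_R(R/p) of R/p does not belong to (FG, FS); that is, there is no finitely generated R-submodule F of E_R(R/p) such that E_R(R/p)/F has finite support. -/
universe u

/-- If `(R, m)` is a commutative Noetherian local ring and `p` is a prime ideal with `V(p)`
infinite, then the injective hull of `R ⧸ p` does not belong to `(FG, FS)`. -/
theorem injective_hull_quotient_prime_not_in_fgfs
    (R : Type u) [CommRing R] [IsNoetherianRing R] [IsLocalRing R]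
    (p : Ideal R) (hp : p.IsPrime)
    (hV : {q : PrimeSpectrum R | p ≤ q.asIdeal}.Infinite) :
    ∀ (E : Type u) [AddCommGroup E] [Module R E] (f : (R ⧸ p) →ₗ[R] E),
      IsInjectiveHull R f → ¬ InFGFS R E := by
  intro E _ _ f ⟨hinj, hf, hess⟩ ⟨F, hFG, hfin⟩
  obtain ⟨q, ⟨hpq, hqn⟩⟩ := (hV.diff (hfin.union (Set.finite_singleton ⟨p, hp⟩))).nonempty
  simp only [Set.mem_union, Set.mem_singleton_iff, not_or] at hqn
  obtain ⟨hqs, hqp⟩ := hqn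
  have hpq' : p ≤ q.asIdeal := hpq
  have hnle : ¬ q.asIdeal ≤ p := fun h => hqp (PrimeSpectrum.ext (le_antisymm h hpq'))
  obtain ⟨x, hxq, hxp⟩ := SetLike.not_le_iff_exists.mp hnle
  -- multiplication by `x` is injective on `E`
  have hker : LinearMap.ker (LinearMap.lsmul R E x) = ⊥ := by
    by_contra hne
    apply hess _ hne
    rw [eq_bot_iff]
    rintro y ⟨hy, ⟨z, rfl⟩⟩
    have hy' : x • f z = 0 := hy
    rw [← map_smul] at hy'
    have hz : x • z = 0 := hf (by rw [hy', map_zero])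
    obtain ⟨r, rfl⟩ := Ideal.Quotient.mk_surjective z
    have h1 : Ideal.Quotient.mk p (x * r) = 0 := hz
    rw [Ideal.Quotient.eq_zero_iff_mem] at h1
    have hr := (hp.mem_or_mem h1).resolve_left hxp
    rw [Ideal.Quotient.eq_zero_iff_mem.mpr hr, map_zero]
    exact Submodule.zero_mem _
  -- hence surjective, by injectivity of `E`
  obtain ⟨g, hg⟩ := hinj.out (LinearMap.lsmul R E x) (LinearMap.ker_eq_bot.mp hker) LinearMap.id
  have hdiv : ∀ e : E, x • g e = e := fun e => by
    have := hg e
    rwa [LinearMap.lsmul_apply, map_smul] at this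
  have hclear : ∀ e : E, ∃ s ∉ q.asIdeal, s • e ∈ F := fun e => by
    rw [Module.notMem_support_iff'] at hqs
    obtain ⟨s, hs, h⟩ := hqs (F.mkQ e)
    refine ⟨s, hs, ?_⟩
    rwa [← map_smul, Submodule.mkQ_apply, Submodule.Quotient.mk_eq_zero] at h
  haveI : Module.Finite R F := Module.Finite.iff_fg.mpr hFG
  have hqF : q ∈ Module.support R F := by
    rw [Module.mem_support_iff']
    obtain ⟨s, hs, hsF⟩ := hclear (f 1)
    refine ⟨⟨_, hsF⟩, fun r hr h => ?_⟩
    have h2 : r • s • f 1 = 0 := congrArg Subtype.val h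
    rw [← map_smul, ← map_smul] at h2
    have h3 : r • s • (1 : R ⧸ p) = 0 := hf (by rw [h2, map_zero])
    have h4 : Ideal.Quotient.mk p (r * (s * 1)) = 0 := h3
    rw [Ideal.Quotient.eq_zero_iff_mem, mul_one] at h4
    exact (q.2.mem_or_mem (hpq' h4)).elim hr hs
  have hmem : q ∈ Module.support R (F ⧸ (Ideal.span {x} • ⊤ : Submodule R F)) := by
    rw [Module.support_quotient]
    refine ⟨hqF, ?_⟩
    rw [PrimeSpectrum.zeroLocus_span, PrimeSpectrum.mem_zeroLocus]
    simpa using hxq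
  rw [Module.mem_support_iff'] at hmem
  obtain ⟨m, hm⟩ := hmem
  obtain ⟨e, rfl⟩ := Submodule.mkQ_surjective _ m
  obtain ⟨s, hs, hsF⟩ := hclear (g e)
  apply hm s hs
  rw [← map_smul, Submodule.mkQ_apply, Submodule.Quotient.mk_eq_zero]
  have : s • e = x • (⟨s • g e, hsF⟩ : F) := by
    apply Subtype.ext
    change s • (e : E) = x • s • g e
    rw [smul_comm, hdiv]
  rw [this]
  exact Submodule.smul_mem_smul (Ideal.mem_span_singleton_self x) trivial
end

section
/- Let (R, m) be a 2-dimensional commutative Noetherian local domain. Then the class (FG, FS) satisfies condition C_I for every ideal I of R; that is, for every ideal I of R and every R-module X such that X = Γ_I(X) and (0 :_X I) belongs to (FG, FS), the module X itself belongs to (FG, FS). In other words, (FG, FS) is a Melkersson subcategory. -/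
universe u

theorem InFGFS.of_equiv {R : Type u} [CommRing R] {X Y : Type u} [AddCommGroup X] [Module R X]
    [AddCommGroup Y] [Module R Y] (e : X ≃ₗ[R] Y) (h : InFGFS R X) : InFGFS R Y := by
  obtain ⟨F, hF, hs⟩ := h
  refine ⟨F.map (e : X →ₗ[R] Y), hF.map _, ?_⟩
  rw [← (Submodule.Quotient.equiv F (F.map (e : X →ₗ[R] Y)) e rfl).support_eq]
  exact hs

theorem finite_primes_over {R : Type u} [CommRing R] [IsNoetherianRing R] [IsLocalRing R]
    [IsDomain R] (hdim : ringKrullDim R = 2) (I : Ideal R) (hI : I ≠ ⊥) :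
    {p : PrimeSpectrum R | I ≤ p.asIdeal}.Finite := by
  have hfin : (PrimeSpectrum.asIdeal ⁻¹' I.minimalPrimes : Set (PrimeSpectrum R)).Finite :=
    (Ideal.finite_minimalPrimes_of_isNoetherianRing R I).preimage
      (fun a _ b _ h => PrimeSpectrum.ext h)
  refine (hfin.union (Set.finite_singleton (IsLocalRing.closedPoint R))).subset ?_
  intro p hp
  by_contra hn
  simp only [Set.mem_union, Set.mem_preimage, Set.mem_singleton_iff, not_or] at hn
  obtain ⟨h1, h2⟩ := hn
  obtain ⟨q, hq, hqp⟩ := Ideal.exists_minimalPrimes_le (show I ≤ p.asIdeal from hp)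
  have hqprime : q.IsPrime := hq.1.1
  let Q : PrimeSpectrum R := ⟨q, hqprime⟩
  have hQp : Q < p := lt_of_le_of_ne hqp (by
    intro h; apply h1; rw [← h]; exact hq)
  have hpm : p < IsLocalRing.closedPoint R :=
    lt_of_le_of_ne (IsLocalRing.le_maximalIdeal p.isPrime.ne_top) h2
  have h0Q : (⟨⊥, Ideal.isPrime_bot⟩ : PrimeSpectrum R) < Q := lt_of_le_of_ne
    (show (⊥ : Ideal R) ≤ q from bot_le) (by
      intro h
      have : (⊥ : Ideal R) = q := congrArg PrimeSpectrum.asIdeal h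
      exact hI (le_bot_iff.1 (this ▸ hq.1.2)))
  let s : LTSeries (PrimeSpectrum R) :=
    { length := 3
      toFun := ![⟨⊥, Ideal.isPrime_bot⟩, Q, p, IsLocalRing.closedPoint R]
      step := by
        intro i
        fin_cases i
        · exact h0Q
        · exact hQp
        · exact hpm }
  have hl : s.length = 3 := rfl
  have := Order.LTSeries.length_le_krullDim s
  rw [hl] at this
  change _ ≤ ringKrullDim R at this
  rw [hdim] at this
  exact absurd this (by decide)

/-- If `(R, m)` is a `2`-dimensional commutative Noetherian local domain, then the class
`(FG, FS)` satisfies the condition `C_I` for every ideal `I` of `R`: whenever `X = Γ_I(X)`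
(every element of `X` is annihilated by a power of `I`) and `(0 :_X I)` belongs to `(FG, FS)`,
then `X` belongs to `(FG, FS)`.  That is, `(FG, FS)` is a Melkersson subcategory. -/
theorem fgfs_is_melkersson
    (R : Type u) [CommRing R] [IsNoetherianRing R] [IsLocalRing R] [IsDomain R]
    (hdim : ringKrullDim R = 2) :
    ∀ (I : Ideal R) (X : Type u) [AddCommGroup X] [Module R X],
      (∀ x : X, ∃ n : ℕ, ∀ a ∈ I ^ n, a • x = 0) →
      InFGFS R ↥(Submodule.torsionBySet R X (I : Set R)) →
      InFGFS R X := by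
  intro I X _ _ hX h
  by_cases hI : I = ⊥
  · have htop : Submodule.torsionBySet R X (I : Set R) = ⊤ := by
      rw [eq_top_iff]
      intro x _
      rw [Submodule.mem_torsionBySet_iff]
      rintro ⟨a, ha⟩
      have : a = 0 := by simpa [hI] using ha
      simp [this]
    exact h.of_equiv (LinearEquiv.ofTop _ htop)
  · refine ⟨⊥, Submodule.fg_bot, ?_⟩
    rw [(Submodule.quotEquivOfEqBot (⊥ : Submodule R X) rfl).support_eq]
    refine (finite_primes_over hdim I hI).subset ?_
    intro p hp
    obtain ⟨x, hx⟩ := Module.mem_support_iff_exists_annihilator.1 hp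
    obtain ⟨n, hn⟩ := hX x
    refine Ideal.IsPrime.le_of_pow_le (n := n) (le_trans ?_ hx)
    intro a ha
    rw [Submodule.mem_annihilator_span_singleton]
    exact hn a ha
end

section
/- Let (R, m) be a 2-dimensional commutative Noetherian local domain with infinitely many prime ideals. Then the class (FG, FS) satisfies condition C_I for every ideal I of R, but (FG, FS) is not closed under injective hulls: there exists an R-module X in (FG, FS) whose injective hull E_R(X) is not in (FG, FS). -/
universe u

theorem aux_zeroLocus_finite (R : Type u) [CommRing R] [IsNoetherianRing R] [IsLocalRing R]
    [IsDomain R] (hdim : ringKrullDim R = 2) (I : Ideal R) (hI : I ≠ ⊥) :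
    (PrimeSpectrum.zeroLocus (I : Set R)).Finite := by
  have h1 : (PrimeSpectrum.asIdeal ⁻¹' I.minimalPrimes : Set (PrimeSpectrum R)).Finite :=
    (I.finite_minimalPrimes_of_isNoetherianRing R).preimage
      (fun a _ b _ hab => PrimeSpectrum.ext hab)
  refine (h1.insert (IsLocalRing.closedPoint R)).subset ?_
  intro q hq
  by_contra hcon
  simp only [Set.mem_insert_iff, Set.mem_preimage, not_or] at hcon
  obtain ⟨hqm, hqmin⟩ := hcon
  have hq' : I ≤ q.asIdeal := hq
  obtain ⟨p, hp, hpq⟩ := Ideal.exists_minimalPrimes_le hq'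
  have : p.IsPrime := hp.1.1
  let P : PrimeSpectrum R := ⟨p, hp.1.1⟩
  have hlt1 : (⊥ : PrimeSpectrum R) < P := by
    rw [bot_lt_iff_ne_bot]
    intro hP
    have : p = ⊥ := congrArg PrimeSpectrum.asIdeal hP
    exact hI (le_bot_iff.1 (this ▸ hp.1.2))
  have hlt2 : P < q := by
    refine lt_of_le_of_ne hpq ?_
    rintro rfl
    exact hqmin hp
  have hlt3 : q < IsLocalRing.closedPoint R :=
    lt_of_le_of_ne (IsLocalRing.le_maximalIdeal q.isPrime.ne_top) hqm
  let s : LTSeries (PrimeSpectrum R) :=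
    { length := 3
      toFun := ![⊥, P, q, IsLocalRing.closedPoint R]
      step := fun i => by
        fin_cases i
        · exact hlt1
        · exact hlt2
        · exact hlt3 }
  have hs : s.length = 3 := rfl
  have := Order.LTSeries.length_le_krullDim s
  rw [hs] at this
  have h2 : ((3 : ℕ) : WithBot ℕ∞) ≤ 2 := hdim ▸ this
  exact absurd h2 (by decide)

theorem aux_support (R : Type u) [CommRing R] (I : Ideal R) (X : Type u) [AddCommGroup X]
    [Module R X] (hX : ∀ x : X, ∃ n : ℕ, ∀ a ∈ I ^ n, a • x = 0) :
    Module.support R X ⊆ PrimeSpectrum.zeroLocus (I : Set R) := by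
  intro p hp
  rw [Module.mem_support_iff'] at hp
  obtain ⟨m, hm⟩ := hp
  obtain ⟨n, hn⟩ := hX m
  intro a ha
  by_contra hap
  exact hm (a ^ n) (fun h => hap (p.isPrime.mem_of_pow_mem n h)) (hn _ (Ideal.pow_mem_pow ha n))

theorem aux_equiv (R : Type u) [CommRing R] (X Y : Type u) [AddCommGroup X] [Module R X]
    [AddCommGroup Y] [Module R Y] (e : X ≃ₗ[R] Y) (h : InFGFS R X) : InFGFS R Y := by
  obtain ⟨F, hF, hs⟩ := h
  refine ⟨F.map (e : X →ₗ[R] Y), hF.map _, ?_⟩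
  rwa [← (Submodule.Quotient.equiv F _ e rfl).support_eq]

theorem aux_hull (R : Type u) [CommRing R] [IsDomain R] (h : Infinite (PrimeSpectrum R))
    (E : Type u) [AddCommGroup E] [Module R E] (f : R →ₗ[R] E) (hE : Module.Injective R E)
    (hf : Function.Injective f) : ¬ InFGFS R E := by
  rintro ⟨F, hF, hs⟩
  obtain ⟨p, hp⟩ := (hs.insert (⊥ : PrimeSpectrum R)).exists_notMem
  simp only [Set.mem_insert_iff, not_or] at hp
  obtain ⟨hp0, hps⟩ := hp
  have hdiv : ∀ r : R, r ≠ 0 → ∀ e : E, ∃ e', r • e' = e := by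
    intro r hr e
    obtain ⟨g, hg⟩ := hE.out (LinearMap.mulLeft R r)
      (by intro a b hab; exact mul_left_cancel₀ hr hab) (LinearMap.toSpanSingleton R E e)
    refine ⟨g 1, ?_⟩
    have := hg 1
    simpa [← map_smul] using this
  obtain ⟨r, hrp, hr0⟩ : ∃ r ∈ p.asIdeal, r ≠ 0 :=
    Submodule.exists_mem_ne_zero_of_ne_bot (fun h => hp0 (PrimeSpectrum.ext h))
  have hps' : ∀ e : E, ∃ t ∉ p.asIdeal, t • e ∈ F := by
    intro e
    rw [Module.notMem_support_iff'] at hps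
    obtain ⟨t, ht, hte⟩ := hps (Submodule.Quotient.mk e)
    exact ⟨t, ht, by rwa [← Submodule.Quotient.mk_smul, Submodule.Quotient.mk_eq_zero] at hte⟩
  let S := p.asIdeal.primeCompl
  let Rp := Localization S
  let Ep := LocalizedModule S E
  obtain ⟨G, hG⟩ := hF
  have htop : Submodule.span Rp (LocalizedModule.mkLinearMap S E '' (G : Set E)) = ⊤ := by
    rw [← Submodule.localized'_span Rp S, hG, eq_top_iff]
    rintro x -
    obtain ⟨⟨e, s⟩, rfl⟩ := IsLocalizedModule.mk'_surjective S (LocalizedModule.mkLinearMap S E) x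
    obtain ⟨t, ht, hte⟩ := hps' e
    refine ⟨t • e, hte, ⟨t, ht⟩ * s, ?_⟩
    exact IsLocalizedModule.mk'_cancel_left _ e ⟨t, ht⟩ s
  have hfg : (⊤ : Submodule Rp Ep).FG := by
    rw [← htop]
    exact Submodule.fg_span (G.finite_toSet.image _)
  have hle : (⊤ : Submodule Rp Ep) ≤ IsLocalRing.maximalIdeal Rp • ⊤ := by
    rintro x -
    obtain ⟨⟨e, s⟩, rfl⟩ := IsLocalizedModule.mk'_surjective S (LocalizedModule.mkLinearMap S E) x
    obtain ⟨e', rfl⟩ := hdiv r hr0 e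
    simp only [Function.uncurry_apply_pair, IsLocalizedModule.mk'_smul]
    rw [← algebraMap_smul Rp r]
    exact Submodule.smul_mem_smul
      ((IsLocalization.AtPrime.to_map_mem_maximal_iff Rp p.asIdeal r).2 hrp) trivial
  have hbot := Submodule.eq_bot_of_le_smul_of_le_jacobson_bot _ _ hfg hle
    (IsLocalRing.maximalIdeal_le_jacobson _)
  have hz : LocalizedModule.mkLinearMap S E (f 1) = 0 := by
    rw [← Submodule.mem_bot Rp, ← hbot]; trivial
  rw [IsLocalizedModule.eq_zero_iff S] at hz
  obtain ⟨c, hc⟩ := hz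
  have : f (c : R) = 0 := by
    rw [← mul_one (c : R), ← smul_eq_mul, map_smul]; exact hc
  have : (c : R) = 0 := hf (by simpa using this)
  exact c.2 (this ▸ p.asIdeal.zero_mem)

/-- If `(R, m)` is a `2`-dimensional commutative Noetherian local domain with infinitely many
prime ideals, then `(FG, FS)` satisfies the condition `C_I` for every ideal `I` of `R`, but
`(FG, FS)` is not closed under injective hulls. -/
theorem fgfs_melkersson_not_closed_under_injective_hulls
    (R : Type u) [CommRing R] [IsNoetherianRing R] [IsLocalRing R] [IsDomain R]
    (hdim : ringKrullDim R = 2) (h : Infinite (PrimeSpectrum R)) :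
    (∀ (I : Ideal R) (X : Type u) [AddCommGroup X] [Module R X],
      (∀ x : X, ∃ n : ℕ, ∀ a ∈ I ^ n, a • x = 0) →
      InFGFS R ↥(Submodule.torsionBySet R X (I : Set R)) →
      InFGFS R X) ∧
    ∃ X : ModuleCat.{u} R, InFGFS R X ∧
      ∀ (E : Type u) [AddCommGroup E] [Module R E] (f : X →ₗ[R] E),
        IsInjectiveHull R f → ¬ InFGFS R E := by
  refine ⟨?_, ModuleCat.of R R, ⟨⊤, Module.Finite.fg_top, ?_⟩, ?_⟩
  · intro I X _ _ hX hT
    by_cases hI : I = ⊥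
    · subst hI
      refine aux_equiv R _ X (LinearEquiv.ofTop _ ?_) hT
      rw [eq_top_iff]
      rintro x -
      rw [Submodule.mem_torsionBySet_iff]
      rintro ⟨a, ha⟩
      have : a = 0 := by simpa using ha
      simp [this]
    · refine ⟨⊥, Submodule.fg_bot, ?_⟩
      rw [(Submodule.quotEquivOfEqBot (⊥ : Submodule R X) rfl).support_eq]
      exact (aux_zeroLocus_finite R hdim I hI).subset (aux_support R I X hX)
  · rw [Module.support_eq_empty]
    exact Set.finite_empty
  · intro E _ _ f hf
    exact aux_hull R h E f hf.1 hf.2.1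
end

section
/- Let (R, m) be a commutative Noetherian local ring and let M be a Serre subcategory of the category of R-modules that contains a nonzero R-module and satisfies condition C_m with respect to the maximal ideal m. Then every Artinian R-module belongs to M. In particular, every Melkersson subcategory containing a nonzero module contains all Artinian R-modules. -/
universe u

/-- A Serre subcategory of the category of `R`-modules: a class of `R`-modules, closed under
isomorphisms, submodules, quotient modules, and extensions. -/
structure SerreClass (R : Type u) [CommRing R] : Type (u + 1) where
  /-- membership predicate of the class -/
  Mem : ∀ (M : Type u) [AddCommGroup M] [Module R M], Prop
  mem_of_iso : ∀ (M N : Type u) [AddCommGroup M] [Module R M] [AddCommGroup N] [Module R N],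
    (M ≃ₗ[R] N) → Mem M → Mem N
  mem_of_submodule : ∀ (M : Type u) [AddCommGroup M] [Module R M] (N : Submodule R M),
    Mem M → Mem N
  mem_of_quotient : ∀ (M : Type u) [AddCommGroup M] [Module R M] (N : Submodule R M),
    Mem M → Mem (M ⧸ N)
  mem_of_extension : ∀ (M : Type u) [AddCommGroup M] [Module R M] (N : Submodule R M),
    Mem N → Mem (M ⧸ N) → Mem M

/-- A Serre subcategory `S` satisfies the condition `C_I` if whenever `X = Γ_I(X)` (every
element of `X` is annihilated by some power of `I`) and `(0 :_X I) ∈ S`, then `X ∈ S`. -/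
def SerreClass.SatisfiesC {R : Type u} [CommRing R] (S : SerreClass R) (I : Ideal R) : Prop :=
  ∀ (X : Type u) [AddCommGroup X] [Module R X],
    (∀ x : X, ∃ n : ℕ, ∀ a ∈ I ^ n, a • x = 0) →
    S.Mem ↥(Submodule.torsionBySet R X (I : Set R)) → S.Mem X


theorem SerreClass.mem_of_finiteLength
    (R : Type u) [CommRing R] [IsLocalRing R] (S : SerreClass R)
    (hne : ∃ M : ModuleCat.{u} R, Nontrivial M ∧ S.Mem M)
    (M : Type u) [AddCommGroup M] [Module R M] (h : IsFiniteLength R M) : S.Mem M := by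
  obtain ⟨N, hN, hS⟩ := hne
  have hk : S.Mem (R ⧸ IsLocalRing.maximalIdeal R) := by
    obtain ⟨x, hx⟩ := exists_ne (0 : N)
    have h1 : S.Mem (R ⧸ LinearMap.ker (LinearMap.toSpanSingleton R N x)) :=
      S.mem_of_iso _ _ (LinearMap.quotKerEquivRange _).symm (S.mem_of_submodule _ _ hS)
    have hle : LinearMap.ker (LinearMap.toSpanSingleton R N x) ≤ IsLocalRing.maximalIdeal R := by
      apply IsLocalRing.le_maximalIdeal
      intro h
      apply hx
      have : (1 : R) ∈ LinearMap.ker (LinearMap.toSpanSingleton R N x) := by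
        rw [h]; exact Submodule.mem_top
      simpa using this
    exact S.mem_of_iso _ _ (LinearMap.quotKerEquivOfSurjective (Submodule.factor hle)
      (Submodule.factor_surjective hle)) (S.mem_of_quotient _ _ h1)
  induction h with
  | of_subsingleton =>
    exact S.mem_of_iso _ _ (0 : (N ⧸ (⊤ : Submodule R N)) ≃ₗ[R] _)
      (S.mem_of_quotient _ ⊤ hS)
  | @of_simple_quotient M _ _ P hP _ ih =>
    refine S.mem_of_extension _ P ih ?_
    obtain ⟨I, hI, ⟨e⟩⟩ := isSimpleModule_iff_quot_maximal.mp hP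
    obtain rfl := IsLocalRing.eq_maximalIdeal hI
    exact S.mem_of_iso _ _ e.symm hk

theorem artinian_torsion_maximalIdeal
    (R : Type u) [CommRing R] [IsNoetherianRing R] [IsLocalRing R]
    (M : Type u) [AddCommGroup M] [Module R M] [IsArtinian R M] (x : M) :
    ∃ n : ℕ, ∀ a ∈ IsLocalRing.maximalIdeal R ^ n, a • x = 0 := by
  let f : ℕ →o (Submodule R M)ᵒᵈ :=
    ⟨fun n => OrderDual.toDual ((IsLocalRing.maximalIdeal R ^ n) • Submodule.span R {x}),
      fun a b hab => Submodule.smul_mono_left (Ideal.pow_le_pow_right hab)⟩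
  obtain ⟨n, hn⟩ := IsArtinian.monotone_stabilizes f
  have h1 : (IsLocalRing.maximalIdeal R ^ n) • Submodule.span R {x} =
    (IsLocalRing.maximalIdeal R ^ (n+1)) • Submodule.span R {x} := hn (n+1) (by omega)
  have hfg : ((IsLocalRing.maximalIdeal R ^ n) • Submodule.span R {x}).FG :=
    Submodule.FG.smul (IsNoetherian.noetherian _) (Submodule.fg_span_singleton x)
  have h0 : (IsLocalRing.maximalIdeal R ^ n) • Submodule.span R {x} = ⊥ := by
    apply Submodule.eq_bot_of_le_smul_of_le_jacobson_bot (IsLocalRing.maximalIdeal R) _ hfg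
    · rw [← mul_smul, ← pow_succ']
      exact h1.le
    · exact (IsLocalRing.jacobson_eq_maximalIdeal ⊥ bot_ne_top).ge
  refine ⟨n, fun a ha => ?_⟩
  have := Submodule.smul_mem_smul ha (Submodule.mem_span_singleton_self (R := R) x)
  rw [h0] at this
  simpa using this

theorem socle_finiteLength
    (R : Type u) [CommRing R] [IsNoetherianRing R] [IsLocalRing R]
    (M : Type u) [AddCommGroup M] [Module R M] [IsArtinian R M] :
    IsFiniteLength R
      ↥(Submodule.torsionBySet R M (IsLocalRing.maximalIdeal R : Set R)) := by
  let m := IsLocalRing.maximalIdeal R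
  have hT := Submodule.torsionBySet_isTorsionBySet (R := R) (M := M) (m : Set R)
  let _ : Field (R ⧸ m) := Ideal.Quotient.field m
  let _ : Module (R ⧸ m) ↥(Submodule.torsionBySet R M (m : Set R)) := hT.module
  have _ : IsScalarTower R (R ⧸ m) ↥(Submodule.torsionBySet R M (m : Set R)) :=
    hT.isScalarTower
  have _ : IsArtinian (R ⧸ m) ↥(Submodule.torsionBySet R M (m : Set R)) :=
    isArtinian_of_tower R inferInstance
  have _ : IsNoetherian (R ⧸ m) ↥(Submodule.torsionBySet R M (m : Set R)) :=
    (IsSemiprimaryRing.isNoetherian_iff_isArtinian (R := R ⧸ m)).mpr inferInstance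
  have _ : Module.Finite R ↥(Submodule.torsionBySet R M (m : Set R)) :=
    Module.Finite.trans (R ⧸ m) _
  exact isFiniteLength_iff_isNoetherian_isArtinian.mpr ⟨isNoetherian_of_isNoetherianRing_of_finite R _, inferInstance⟩

/-- Let `(R, m)` be a commutative Noetherian local ring and `S` a Serre subcategory containing
a nonzero module and satisfying the condition `C_m`.  Then every Artinian `R`-module belongs
to `S`; in particular every (nontrivial) Melkersson subcategory contains all Artinian
`R`-modules. -/
theorem artinian_mem_of_satisfiesC_maximalIdeal
    (R : Type u) [CommRing R] [IsNoetherianRing R] [IsLocalRing R] (S : SerreClass R)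
    (hne : ∃ M : ModuleCat.{u} R, Nontrivial M ∧ S.Mem M)
    (hC : S.SatisfiesC (IsLocalRing.maximalIdeal R)) :
    ∀ (M : Type u) [AddCommGroup M] [Module R M], IsArtinian R M → S.Mem M := by
  intro M _ _ hM
  exact hC M (artinian_torsion_maximalIdeal R M)
    (S.mem_of_finiteLength R hne _ (socle_finiteLength R M))
end

section
/- Let (R, m) be a commutative Noetherian local ring and let M be a Serre subcategory of the category of R-modules that contains a nonzero R-module and satisfies condition C_m with respect to the maximal ideal m. Then the injective hull E_R(R/m) of the residue field belongs to M. -/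
universe u

/-- The residue field lies in any Serre class containing a nonzero module. -/
theorem residue_mem_aux
    (R : Type u) [CommRing R] [IsLocalRing R] (S : SerreClass R)
    (hne : ∃ M : ModuleCat.{u} R, Nontrivial M ∧ S.Mem M) :
    S.Mem (R ⧸ IsLocalRing.maximalIdeal R) := by
  obtain ⟨M, hM, hS⟩ := hne
  obtain ⟨x, hx⟩ := exists_ne (0 : M)
  let g : R →ₗ[R] M := LinearMap.toSpanSingleton R M x
  have h1 : S.Mem (LinearMap.range g) := S.mem_of_submodule M _ hS
  have h2 : S.Mem (R ⧸ LinearMap.ker g) :=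
    S.mem_of_iso _ _ g.quotKerEquivRange.symm h1
  have hle : LinearMap.ker g ≤ IsLocalRing.maximalIdeal R := by
    apply IsLocalRing.le_maximalIdeal
    intro htop
    have h1' : (1 : R) ∈ LinearMap.ker g := by rw [htop]; trivial
    apply hx
    simpa [g] using h1'
  exact S.mem_of_iso _ _ (Submodule.quotientQuotientEquivQuotient _ _ hle)
    (S.mem_of_quotient _ (Submodule.map (LinearMap.ker g).mkQ (IsLocalRing.maximalIdeal R)) h2)

theorem injective_hull_residue_field_mem
    (R : Type u) [CommRing R] [IsNoetherianRing R] [IsLocalRing R] (S : SerreClass R)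
    (hne : ∃ M : ModuleCat.{u} R, Nontrivial M ∧ S.Mem M)
    (hC : S.SatisfiesC (IsLocalRing.maximalIdeal R)) :
    ∀ (E : Type u) [AddCommGroup E] [Module R E]
      (f : (R ⧸ IsLocalRing.maximalIdeal R) →ₗ[R] E),
      IsInjectiveHull R f → S.Mem E := by
  intro E _ _ f hf
  obtain ⟨-, hinj, hess⟩ := hf
  have hk := residue_mem_aux R S hne
  -- every nonzero element has a nonzero multiple in the image of `f`
  have key : ∀ x : E, x ≠ 0 → ∃ r : R, r • x ≠ 0 ∧ r • x ∈ LinearMap.range f := by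
    intro x hx
    have h := hess (Submodule.span R {x}) (by simpa using hx)
    obtain ⟨y, hy, hy0⟩ := Submodule.exists_mem_ne_zero_of_ne_bot h
    obtain ⟨r, rfl⟩ := Submodule.mem_span_singleton.1 hy.1
    exact ⟨r, hy0, hy.2⟩
  -- the maximal ideal kills the image of `f`
  have kill : ∀ a ∈ IsLocalRing.maximalIdeal R, ∀ y ∈ LinearMap.range f, a • y = 0 := by
    rintro a ha _ ⟨z, rfl⟩
    obtain ⟨b, rfl⟩ := Submodule.Quotient.mk_surjective _ z
    rw [← map_smul, ← Submodule.Quotient.mk_smul,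
      (Submodule.Quotient.mk_eq_zero _).2 (by simpa using Ideal.mul_mem_right b _ ha), map_zero]
  apply hC
  · intro x
    let J : Ideal R := LinearMap.ker (LinearMap.toSpanSingleton R E x)
    have hJ : ∀ a, a ∈ J ↔ a • x = 0 := by intro a; simp [J]
    have hrad : IsLocalRing.maximalIdeal R ≤ J.radical := by
      intro a ha
      let K : ℕ →o Ideal R :=
        ⟨fun n => LinearMap.ker (LinearMap.toSpanSingleton R E (a ^ n • x)), by
          apply monotone_nat_of_le_succ
          intro n r hr
          simp only [LinearMap.mem_ker, LinearMap.toSpanSingleton_apply] at hr ⊢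
          rw [pow_succ', mul_smul, smul_comm, hr, smul_zero]⟩
      obtain ⟨n, hn⟩ := monotone_stabilizes_iff_noetherian.2 (inferInstance : IsNoetherian R R) K
      refine ⟨n, (hJ _).2 ?_⟩
      by_contra h0
      obtain ⟨r, hr0, hr⟩ := key _ h0
      have h2 : r ∈ K (n + 1) := by
        change r ∈ LinearMap.ker (LinearMap.toSpanSingleton R E (a ^ (n + 1) • x))
        rw [LinearMap.mem_ker, LinearMap.toSpanSingleton_apply, pow_succ', mul_smul, smul_comm]
        exact kill a ha _ hr
      rw [← hn (n + 1) (Nat.le_succ n)] at h2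
      exact hr0 h2
    obtain ⟨n, hn⟩ := Ideal.exists_pow_le_of_le_radical_of_fg hrad
      (IsNoetherian.noetherian _)
    exact ⟨n, fun a ha => (hJ a).1 (hn ha)⟩
  · have heq : LinearMap.range f =
        Submodule.torsionBySet R E (IsLocalRing.maximalIdeal R : Set R) := by
      apply le_antisymm
      · intro y hy
        rw [Submodule.mem_torsionBySet_iff]
        rintro ⟨a, ha⟩
        exact kill a ha y hy
      · intro x hx
        rw [Submodule.mem_torsionBySet_iff] at hx
        by_cases h0 : x = 0
        · rw [h0]; exact Submodule.zero_mem _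
        obtain ⟨r, hr0, hr⟩ := key x h0
        have hu : IsUnit r := by
          by_contra hnu
          exact hr0 (hx ⟨r, (IsLocalRing.mem_maximalIdeal r).2 hnu⟩)
        exact (Submodule.smul_mem_iff_of_isUnit _ hu).1 hr
    exact S.mem_of_iso _ _ ((LinearEquiv.ofInjective f hinj).trans (LinearEquiv.ofEq _ _ heq)) hk
end

section
/- Let R be a commutative Noetherian ring and let M be a Serre subcategory of the category of R-modules. Then M is a Melkersson subcategory (i.e., satisfies condition C_I for all ideals I of R) if and only if M satisfies condition C_{√I} with respect to the radical √I for every ideal I of R. -/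
universe u

/-- Let `R` be a commutative Noetherian ring and `M` a Serre subcategory of the category of
`R`-modules.  Then `M` is a Melkersson subcategory (it satisfies `C_I` for every ideal `I`)
if and only if `M` satisfies `C_√I` for the radical of every ideal `I` of `R`. -/
theorem melkersson_iff_satisfiesC_radical
    (R : Type u) [CommRing R] [IsNoetherianRing R] (S : SerreClass R) :
    (∀ I : Ideal R, S.SatisfiesC I) ↔ (∀ I : Ideal R, S.SatisfiesC I.radical) := by
  constructor
  · intro h I
    exact h I.radical
  · intro h I X _ _ hX hmem
    obtain ⟨k, hk⟩ := I.exists_radical_pow_le_of_fg (IsNoetherian.noetherian _)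
    refine h I X ?_ ?_
    · intro x
      obtain ⟨n, hn⟩ := hX x
      refine ⟨k * n, fun a ha => hn a ?_⟩
      rw [pow_mul] at ha
      exact Ideal.pow_right_mono hk n ha
    · have hle : Submodule.torsionBySet R X (I.radical : Set R) ≤
          Submodule.torsionBySet R X (I : Set R) :=
        Submodule.torsionBySet_le_torsionBySet_of_subset I.le_radical
      exact S.mem_of_iso _ _ (Submodule.submoduleOfEquivOfLe hle)
        (S.mem_of_submodule _ _ hmem)
end

section
/- Let R be a commutative Noetherian ring and let S be a Serre subcategory of the category of finitely generated R-modules. Then S satisfies condition C_I within the category of finitely generated modules for every ideal I of R: if M is a finitely generated R-module with M = Γ_I(M) and (0 :_M I) ∈ S, then M ∈ S. -/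
universe u

theorem SerreClass.mem_of_injective {R : Type u} [CommRing R] (S : SerreClass R)
    {A B : Type u} [AddCommGroup A] [Module R A] [AddCommGroup B] [Module R B]
    (f : A →ₗ[R] B) (hf : Function.Injective f) (hB : S.Mem B) : S.Mem A :=
  S.mem_of_iso _ _ (LinearEquiv.ofInjective f hf).symm (S.mem_of_submodule B (LinearMap.range f) hB)

theorem SerreClass.mem_of_joint {R : Type u} [CommRing R] (S : SerreClass R)
    {A B C : Type u} [AddCommGroup A] [Module R A] [AddCommGroup B] [Module R B]
    [AddCommGroup C] [Module R C]
    (f : A →ₗ[R] B) (hB : S.Mem B) (g : LinearMap.ker f →ₗ[R] C) (hg : Function.Injective g)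
    (hC : S.Mem C) : S.Mem A := by
  apply S.mem_of_extension A (LinearMap.ker f) (S.mem_of_injective g hg hC)
  exact S.mem_of_iso _ _ f.quotKerEquivRange.symm (S.mem_of_submodule B (LinearMap.range f) hB)

theorem SerreClass.mem_pi {R : Type u} [CommRing R] (S : SerreClass R)
    {A : Type u} [AddCommGroup A] [Module R A] (hA : S.Mem A) (t : ℕ) : S.Mem (Fin t → A) := by
  induction t with
  | zero => exact S.mem_of_injective (0 : (Fin 0 → A) →ₗ[R] A) (Function.injective_of_subsingleton _) hA
  | succ t ih =>
    refine S.mem_of_joint (LinearMap.funLeft R A (Fin.succ : Fin t → Fin (t + 1))) ih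
      ((LinearMap.proj (R := R) (φ := fun _ : Fin (t + 1) => A) 0).comp (Submodule.subtype _)) ?_ hA
    rw [injective_iff_map_eq_zero]
    rintro ⟨x, hx⟩ h
    have h' : x 0 = 0 := h
    have hx' : ∀ i : Fin t, x i.succ = 0 := fun i => congrFun (LinearMap.mem_ker.1 hx) i
    apply Subtype.ext
    funext i
    exact Fin.cases h' hx' i

theorem exists_uniform_pow {R : Type u} [CommRing R] (I : Ideal R) (M : Type u)
    [AddCommGroup M] [Module R M] (hM : ∀ x : M, ∃ n : ℕ, ∀ a ∈ I ^ n, a • x = 0)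
    (N : Submodule R M) (hN : N.FG) : ∃ n : ℕ, ∀ x ∈ N, ∀ a ∈ I ^ n, a • x = 0 := by
  induction N, hN using Submodule.fg_induction with
  | singleton x =>
    obtain ⟨n, hn⟩ := hM x
    refine ⟨n, fun y hy a ha => ?_⟩
    obtain ⟨r, rfl⟩ := Submodule.mem_span_singleton.1 hy
    rw [smul_comm, hn a ha, smul_zero]
  | sup N₁ N₂ _ _ h₁ h₂ =>
    obtain ⟨n, hn⟩ := h₁
    obtain ⟨m, hm⟩ := h₂
    refine ⟨n + m, fun y hy a ha => ?_⟩
    obtain ⟨u, hu, v, hv, rfl⟩ := Submodule.mem_sup.1 hy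
    rw [smul_add, hn u hu a (Ideal.pow_le_pow_right (Nat.le_add_right _ _) ha),
      hm v hv a (Ideal.pow_le_pow_right (Nat.le_add_left _ _) ha), add_zero]

/-- Let `R` be a commutative Noetherian ring and `S` a Serre subcategory of the category of
finitely generated `R`-modules (that is, a Serre subcategory all of whose members are
finitely generated).  Then `S` satisfies the condition `C_I` within finitely generated
modules for every ideal `I` of `R`: if `M` is finitely generated, `M = Γ_I(M)` and
`(0 :_M I) ∈ S`, then `M ∈ S`. -/
theorem serreClass_fg_satisfiesC
    (R : Type u) [CommRing R] [IsNoetherianRing R] (S : SerreClass R)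
    (hfg : ∀ (M : Type u) [AddCommGroup M] [Module R M], S.Mem M → Module.Finite R M)
    (I : Ideal R) (M : Type u) [AddCommGroup M] [Module R M] [Module.Finite R M]
    (hM : ∀ x : M, ∃ n : ℕ, ∀ a ∈ I ^ n, a • x = 0)
    (h0 : S.Mem ↥(Submodule.torsionBySet R M (I : Set R))) :
    S.Mem M := by
  classical
  obtain ⟨t, a, ha⟩ := Submodule.fg_iff_exists_fin_generating_family.1 (IsNoetherian.noetherian I)
  have haI : ∀ i, a i ∈ I := fun i => ha ▸ Submodule.subset_span ⟨i, rfl⟩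
  have key : ∀ n : ℕ, S.Mem ↥(Submodule.torsionBySet R M ((I ^ n : Ideal R) : Set R)) := by
    intro n
    induction n with
    | zero =>
      refine S.mem_of_injective (0 : _ →ₗ[R] _) ?_ h0
      rw [injective_iff_map_eq_zero]
      rintro ⟨x, hx⟩ -
      apply Subtype.ext
      have := (Submodule.mem_torsionBySet_iff _ _).1 hx ⟨1, by simp⟩
      simpa using this
    | succ n ih =>
      let f : ↥(Submodule.torsionBySet R M ((I ^ (n + 1) : Ideal R) : Set R)) →ₗ[R]
          (Fin t → ↥(Submodule.torsionBySet R M ((I ^ n : Ideal R) : Set R))) :=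
        LinearMap.pi fun i => LinearMap.codRestrict _
          ((a i) • Submodule.subtype _) (by
            rintro ⟨x, hx⟩
            rw [Submodule.mem_torsionBySet_iff]
            rintro ⟨b, hb⟩
            have := (Submodule.mem_torsionBySet_iff _ _).1 hx
              ⟨b * a i, by rw [pow_succ]; exact Ideal.mul_mem_mul hb (haI i)⟩
            simpa [mul_smul] using this)
      let g : LinearMap.ker f →ₗ[R] ↥(Submodule.torsionBySet R M (I : Set R)) :=
        LinearMap.codRestrict _ ((Submodule.subtype _).comp (Submodule.subtype _)) (by
          rintro ⟨⟨x, hx⟩, hk⟩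
          have hk' : ∀ i, a i • x = 0 := fun i =>
            congrArg Subtype.val (congrFun (LinearMap.mem_ker.1 hk) i)
          rw [Submodule.mem_torsionBySet_iff]
          rintro ⟨b, hb⟩
          have hle : I ≤ LinearMap.ker (LinearMap.toSpanSingleton R M x) := by
            rw [← ha, Submodule.span_le]
            rintro _ ⟨i, rfl⟩
            simpa using hk' i
          simpa using hle hb)
      refine S.mem_of_joint f (S.mem_pi ih t) g ?_ h0
      intro x y hxy
      have h : (g x).val = (g y).val := congrArg Subtype.val hxy
      exact Subtype.ext (Subtype.ext h)
  obtain ⟨n, hn⟩ := exists_uniform_pow I M hM ⊤ Module.Finite.fg_top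
  refine S.mem_of_injective (LinearMap.codRestrict _ LinearMap.id ?_) ?_ (key n)
  · intro x
    rw [Submodule.mem_torsionBySet_iff]
    rintro ⟨b, hb⟩
    exact hn x trivial b hb
  · intro x y hxy
    exact congrArg Subtype.val hxy
end

section
/- Let (R, m) be a 2-dimensional commutative Noetherian local domain, let I be a nonzero ideal of R, and let X be an R-module with X = Γ_I(X). Then Supp(X) ⊆ Ass(X) ∪ {m}; in particular, if Ass(X) is a finite set then Supp(X) is a finite set. -/
universe u

/-- Let `(R, m)` be a `2`-dimensional commutative Noetherian local domain, `I` a nonzero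
ideal of `R`, and `X` an `R`-module with `X = Γ_I(X)` (every element of `X` is annihilated by
some power of `I`).  Then `Supp(X) ⊆ Ass(X) ∪ {m}`; in particular, if `Ass(X)` is finite then
`Supp(X)` is finite. -/
theorem support_subset_ass_union_maximal
    (R : Type u) [CommRing R] [IsNoetherianRing R] [IsLocalRing R] [IsDomain R]
    (hdim : ringKrullDim R = 2) (I : Ideal R) (hI : I ≠ ⊥)
    (X : Type u) [AddCommGroup X] [Module R X]
    (hX : ∀ x : X, ∃ n : ℕ, ∀ a ∈ I ^ n, a • x = 0) :
    Module.support R X ⊆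
      {p : PrimeSpectrum R | p.asIdeal ∈ associatedPrimes R X} ∪
        {IsLocalRing.closedPoint R} ∧
    ((associatedPrimes R X).Finite → (Module.support R X).Finite) := by
  have key : Module.support R X ⊆
      {p : PrimeSpectrum R | p.asIdeal ∈ associatedPrimes R X} ∪
        {IsLocalRing.closedPoint R} := by
    intro p hp
    obtain ⟨x, hx⟩ := Module.mem_support_iff_exists_annihilator.mp hp
    obtain ⟨q, hq, hqp⟩ := Ideal.exists_minimalPrimes_le hx
    have hqprime : q.IsPrime := hq.1.1
    have hqass : q ∈ associatedPrimes R X :=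
      associatedPrimes.subset_of_injective (Submodule.injective_subtype (Submodule.span R {x}))
        (Module.associatedPrimes.minimalPrimes_annihilator_subset_associatedPrimes R _ hq)
    have hIq : I ≤ q := by
      obtain ⟨n, hn⟩ := hX x
      refine Ideal.IsPrime.le_of_pow_le (n := n) (le_trans ?_ hq.1.2)
      intro a ha
      rw [Submodule.mem_annihilator_span_singleton]
      exact hn a ha
    by_cases hqe : q = p.asIdeal
    · left
      change p.asIdeal ∈ associatedPrimes R X
      exact hqe ▸ hqass
    right
    by_contra hpm
    let q' : PrimeSpectrum R := ⟨q, hqprime⟩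
    have h1 : (⊥ : PrimeSpectrum R) < q' := by
      rw [bot_lt_iff_ne_bot]
      intro h
      have h2 : q = ⊥ := congrArg PrimeSpectrum.asIdeal h
      exact hI (le_bot_iff.mp (h2 ▸ hIq))
    have h2 : q' < p := lt_of_le_of_ne hqp (fun h => hqe (congrArg PrimeSpectrum.asIdeal h))
    have h3 : p < IsLocalRing.closedPoint R :=
      lt_of_le_of_ne (IsLocalRing.le_maximalIdeal p.2.ne_top) hpm
    let s : LTSeries (PrimeSpectrum R) :=
      { length := 3
        toFun := ![⊥, q', p, IsLocalRing.closedPoint R]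
        step := by
          intro i
          fin_cases i
          · exact h1
          · exact h2
          · exact h3 }
    have h4 : ((s.length : ℕ) : WithBot ℕ∞) ≤ ringKrullDim R := Order.LTSeries.length_le_krullDim s
    have h5 : s.length = 3 := rfl
    rw [hdim, h5] at h4
    exact absurd h4 (by decide)
  refine ⟨key, fun hfin => Set.Finite.subset (Set.Finite.union ?_ (Set.finite_singleton _)) key⟩
  exact hfin.preimage (fun a _ b _ h => PrimeSpectrum.ext h)
end
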